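/- Let Ω be an open subset of ℝⁿ and let f, g, h be H-continuous pairs on Ω. Then (f ⊗ g) ⊗ h = f ⊗ (g ⊗ h), where each ⊗ denotes the unique H-continuous pair contained in the pointwise interval product of its two arguments. -/

import Mathlib

open Set

/-- Points of `ℝⁿ`. -/
abbrev Pt (n : ℕ) := EuclideanSpace ℝ (Fin n)

/-- Lower Baire operator `I(D,Ω,f)(x) = sup_{δ>0} inf { f y : y ∈ B_δ(x) ∩ D }`,
where `B_δ(x) = { y ∈ Ω : ‖y - x‖ < δ }`. -/
noncomputable def Ilow {n : ℕ} (D Om : Set (Pt n)) (f : Pt n → ℝ) (x : Pt n) : ℝ :=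
  sSup {a : ℝ | ∃ δ : ℝ, 0 < δ ∧
    a = sInf (f '' {y | y ∈ Om ∧ ‖y - x‖ < δ ∧ y ∈ D})}

/-- Upper Baire operator `S(D,Ω,f)(x) = inf_{δ>0} sup { f y : y ∈ B_δ(x) ∩ D }`. -/
noncomputable def Shigh {n : ℕ} (D Om : Set (Pt n)) (f : Pt n → ℝ) (x : Pt n) : ℝ :=
  sInf {a : ℝ | ∃ δ : ℝ, 0 < δ ∧
    a = sSup (f '' {y | y ∈ Om ∧ ‖y - x‖ < δ ∧ y ∈ D})}

/-- `f`, defined on `D ⊆ Ω`, is locally bounded relative to `Ω`. -/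
def LocBddOn {n : ℕ} (Om D : Set (Pt n)) (f : Pt n → ℝ) : Prop :=
  ∀ x ∈ Om, ∃ δ : ℝ, 0 < δ ∧ ∃ M : ℝ,
    ∀ y, y ∈ Om → ‖y - x‖ < δ → y ∈ D → |f y| < M

/-- `(u, v)` encodes an interval-valued function `x ↦ [u x, v x]` on `Om`. -/
def IntervalPair {n : ℕ} (Om : Set (Pt n)) (u v : Pt n → ℝ) : Prop :=
  LocBddOn Om Om u ∧ LocBddOn Om Om v ∧ ∀ x ∈ Om, u x ≤ v x

/-- The pair `(u, v)` is S-continuous on `Om`: `I(u) = u` and `S(v) = v`. -/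
def SCont {n : ℕ} (Om : Set (Pt n)) (u v : Pt n → ℝ) : Prop :=
  ∀ x ∈ Om, Ilow Om Om u x = u x ∧ Shigh Om Om v x = v x

/-- The pair `(u, v)` is Hausdorff continuous on `Om`. -/
def HCont {n : ℕ} (Om : Set (Pt n)) (u v : Pt n → ℝ) : Prop :=
  ∀ p q : Pt n → ℝ, LocBddOn Om Om p → LocBddOn Om Om q →
    (∀ x ∈ Om, u x ≤ p x ∧ p x ≤ q x ∧ q x ≤ v x) →
    ∀ x ∈ Om, Ilow Om Om p x = u x ∧ Shigh Om Om q x = v x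

/-- `(u, v)` is an H-continuous interval pair on `Om`. -/
def HContPair {n : ℕ} (Om : Set (Pt n)) (u v : Pt n → ℝ) : Prop :=
  IntervalPair Om u v ∧ HCont Om u v

/-- Lower endpoint of the pointwise interval product. -/
noncomputable def imin {n : ℕ} (u₁ v₁ u₂ v₂ : Pt n → ℝ) (x : Pt n) : ℝ :=
  min (min (u₁ x * u₂ x) (u₁ x * v₂ x)) (min (v₁ x * u₂ x) (v₁ x * v₂ x))

/-- Upper endpoint of the pointwise interval product. -/
noncomputable def imax {n : ℕ} (u₁ v₁ u₂ v₂ : Pt n → ℝ) (x : Pt n) : ℝ :=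
  max (max (u₁ x * u₂ x) (u₁ x * v₂ x)) (max (v₁ x * u₂ x) (v₁ x * v₂ x))

/-- `(pl, pu)` is the H-continuous pair contained pointwise in the interval sum of
`(u₁, v₁)` and `(u₂, v₂)`, i.e. `(pl, pu) = (u₁,v₁) ⊕ (u₂,v₂)`. -/
def IsOplus {n : ℕ} (Om : Set (Pt n)) (u₁ v₁ u₂ v₂ pl pu : Pt n → ℝ) : Prop :=
  HContPair Om pl pu ∧
    ∀ x ∈ Om, u₁ x + u₂ x ≤ pl x ∧ pl x ≤ pu x ∧ pu x ≤ v₁ x + v₂ x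

/-- `(ql, qu)` is the H-continuous pair contained pointwise in the interval product of
`(u₁, v₁)` and `(u₂, v₂)`, i.e. `(ql, qu) = (u₁,v₁) ⊗ (u₂,v₂)`. -/
def IsOtimes {n : ℕ} (Om : Set (Pt n)) (u₁ v₁ u₂ v₂ ql qu : Pt n → ℝ) : Prop :=
  HContPair Om ql qu ∧
    ∀ x ∈ Om, imin u₁ v₁ u₂ v₂ x ≤ ql x ∧ ql x ≤ qu x ∧ qu x ≤ imax u₁ v₁ u₂ v₂ x


theorem Shigh_eq_neg {n : ℕ} (D Om : Set (Pt n)) (f : Pt n → ℝ) (x : Pt n) :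
    Shigh D Om f x = - Ilow D Om (fun y => - f y) x := by
  unfold Shigh Ilow
  rw [Real.sInf_def]
  congr 2
  ext a
  simp only [Set.mem_neg, Set.mem_ofPred_eq]
  have key : ∀ T : Set (Pt n), sInf ((fun y => - f y) '' T) = - sSup (f '' T) := by
    intro T
    rw [Real.sInf_def]
    congr 2
    ext b
    simp only [Set.mem_neg, Set.mem_image]
    constructor
    · rintro ⟨y, hy, h⟩
      exact ⟨y, hy, by linarith⟩
    · rintro ⟨y, hy, h⟩
      exact ⟨y, hy, by linarith⟩
  constructor
  · rintro ⟨δ, hδ, h⟩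
    exact ⟨δ, hδ, by rw [key]; linarith⟩
  · rintro ⟨δ, hδ, h⟩
    exact ⟨δ, hδ, by rw [key] at h; linarith⟩

theorem LocBddOn.neg' {n : ℕ} {Om D : Set (Pt n)} {f : Pt n → ℝ} (h : LocBddOn Om D f) :
    LocBddOn Om D (fun y => - f y) := by
  intro x hx
  obtain ⟨δ, hδ, M, hM⟩ := h x hx
  exact ⟨δ, hδ, M, fun y h1 h2 h3 => by rw [abs_neg]; exact hM y h1 h2 h3⟩

theorem HContPair.neg' {n : ℕ} {Om : Set (Pt n)} {u v : Pt n → ℝ} (h : HContPair Om u v) :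
    HContPair Om (fun y => - v y) (fun y => - u y) := by
  obtain ⟨⟨hu, hv, huv⟩, H⟩ := h
  refine ⟨⟨hv.neg', hu.neg', fun x hx => neg_le_neg (huv x hx)⟩, ?_⟩
  intro p q hp hq hpq x hx
  have := H (fun y => - q y) (fun y => - p y) hq.neg' hp.neg'
    (fun y hy => by
      obtain ⟨a, b, c⟩ := hpq y hy
      exact ⟨by linarith, by linarith, by linarith⟩) x hx
  rw [Shigh_eq_neg] at this ⊢
  simp only [neg_neg] at this
  exact ⟨by linarith [this.2], by linarith [this.1]⟩

theorem Iset_bdd {n : ℕ} {Om : Set (Pt n)} {p : Pt n → ℝ} {x : Pt n} (hx : x ∈ Om) :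
    BddAbove {a : ℝ | ∃ δ : ℝ, 0 < δ ∧
      a = sInf (p '' {y | y ∈ Om ∧ ‖y - x‖ < δ ∧ y ∈ Om})} := by
  refine ⟨max (p x) 0, ?_⟩
  rintro a ⟨δ, hδ, rfl⟩
  by_cases hb : BddBelow (p '' {y | y ∈ Om ∧ ‖y - x‖ < δ ∧ y ∈ Om})
  · exact le_max_of_le_left (csInf_le hb ⟨x, ⟨hx, by simpa using hδ, hx⟩, rfl⟩)
  · rw [Real.sInf_of_not_bddBelow hb]
    exact le_max_right _ _

theorem le_Ilow {n : ℕ} {Om : Set (Pt n)} {p : Pt n → ℝ} {x : Pt n} (hx : x ∈ Om)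
    {m δ : ℝ} (hδ : 0 < δ) (h : ∀ y ∈ Om, ‖y - x‖ < δ → m ≤ p y) : m ≤ Ilow Om Om p x := by
  unfold Ilow
  refine le_trans ?_ (le_csSup (Iset_bdd hx) ⟨δ, hδ, rfl⟩)
  apply le_csInf
  · exact ⟨_, x, ⟨hx, by simpa using hδ, hx⟩, rfl⟩
  · rintro _ ⟨y, ⟨h1, h2, -⟩, rfl⟩
    exact h y h1 h2

theorem bddBelow_of_Ilow {n : ℕ} {Om : Set (Pt n)} {u : Pt n → ℝ}
    (h : ∀ x ∈ Om, Ilow Om Om u x = u x) (x0 : Pt n) (δ0 : ℝ) (hδ0 : 0 < δ0) :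
    BddBelow (u '' {y | y ∈ Om ∧ ‖y - x0‖ < δ0 ∧ y ∈ Om}) := by
  by_contra hb
  apply hb
  refine ⟨0, ?_⟩
  rintro _ ⟨x, ⟨hx, -, -⟩, rfl⟩
  rw [← h x hx]
  unfold Ilow
  apply le_csSup (Iset_bdd hx)
  refine ⟨δ0 + ‖x0 - x‖, by positivity, ?_⟩
  rw [Real.sInf_of_not_bddBelow]
  intro hb'
  apply hb
  refine hb'.mono (image_mono ?_)
  rintro y ⟨h1, h2, -⟩
  refine ⟨h1, ?_, h1⟩
  have := norm_add_le (y - x0) (x0 - x)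
  rw [sub_add_sub_cancel] at this
  linarith

theorem HContPair.lsc {n : ℕ} {Om : Set (Pt n)} {u v : Pt n → ℝ} (h : HContPair Om u v)
    {x : Pt n} (hx : x ∈ Om) {ε : ℝ} (hε : 0 < ε) :
    ∃ δ : ℝ, 0 < δ ∧ ∀ y ∈ Om, ‖y - x‖ < δ → u x - ε < u y := by
  have hI : ∀ x ∈ Om, Ilow Om Om u x = u x := fun x hx =>
    (h.2 u v h.1.1 h.1.2.1 (fun y hy => ⟨le_rfl, h.1.2.2 y hy, le_rfl⟩) x hx).1
  have h1 : u x - ε < Ilow Om Om u x := by rw [hI x hx]; linarith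
  unfold Ilow at h1
  obtain ⟨a, ⟨δ, hδ, rfl⟩, ha⟩ := exists_lt_of_lt_csSup (by exact ⟨_, 1, one_pos, rfl⟩) h1
  refine ⟨δ, hδ, fun y hy hyx => lt_of_lt_of_le ha ?_⟩
  exact csInf_le (bddBelow_of_Ilow hI x δ hδ) ⟨y, ⟨hy, hyx, hy⟩, rfl⟩

theorem HContPair.usc {n : ℕ} {Om : Set (Pt n)} {u v : Pt n → ℝ} (h : HContPair Om u v)
    {x : Pt n} (hx : x ∈ Om) {ε : ℝ} (hε : 0 < ε) :
    ∃ δ : ℝ, 0 < δ ∧ ∀ y ∈ Om, ‖y - x‖ < δ → v y < v x + ε := by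
  obtain ⟨δ, hδ, H⟩ := h.neg'.lsc hx hε
  exact ⟨δ, hδ, fun y hy hyx => by linarith [H y hy hyx]⟩

theorem HContPair.exists_small {n : ℕ} {Om : Set (Pt n)} (hOm : IsOpen Om) {u v : Pt n → ℝ}
    (h : HContPair Om u v) {W : Set (Pt n)} (hW : IsOpen W) {x0 : Pt n} (hx0 : x0 ∈ W ∩ Om)
    {ε : ℝ} (hε : 0 < ε) : ∃ x ∈ W ∩ Om, v x - u x < ε := by
  obtain ⟨r, hr, hrs⟩ := Metric.isOpen_iff.1 (hW.inter hOm) x0 hx0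
  obtain ⟨δ, hδ, M, hM⟩ := h.1.1 x0 hx0.2
  set B := Metric.ball x0 (min r δ) with hB
  have hBs : B ⊆ W ∩ Om := (Metric.ball_subset_ball (min_le_left _ _)).trans hrs
  have hne : (u '' B).Nonempty := ⟨_, x0, Metric.mem_ball_self (lt_min hr hδ), rfl⟩
  have hbd : BddAbove (u '' B) := by
    refine ⟨M, ?_⟩
    rintro _ ⟨y, hy, rfl⟩
    have h2 : ‖y - x0‖ < δ := by
      rw [← dist_eq_norm]; exact lt_of_lt_of_le hy (min_le_right _ _)
    exact (le_abs_self _).trans (hM y (hBs hy).2 h2 (hBs hy).2).le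
  obtain ⟨_, ⟨x, hxB, rfl⟩, hx⟩ := exists_lt_of_lt_csSup hne (sub_lt_self (sSup (u '' B)) hε)
  refine ⟨x, hBs hxB, ?_⟩
  have hS := (h.2 u u h.1.1 h.1.1 (fun y hy => ⟨le_rfl, le_rfl, h.1.2.2 y hy⟩) x (hBs hxB).2).2
  rw [Shigh_eq_neg] at hS
  obtain ⟨d, hd, hds⟩ := Metric.isOpen_iff.1 (Metric.isOpen_ball (x := x0) (ε := min r δ)) x hxB
  have := le_Ilow (p := fun y => - u y) (m := - sSup (u '' B)) (hBs hxB).2 hd (fun y hy hyx => by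
    have : y ∈ B := hds (by rw [Metric.mem_ball, dist_eq_norm]; exact hyx)
    exact neg_le_neg (le_csSup hbd ⟨y, this, rfl⟩))
  linarith

theorem HContPair.resid {n : ℕ} {Om : Set (Pt n)} (hOm : IsOpen Om) {u v : Pt n → ℝ}
    (h : HContPair Om u v) : ∀ᶠ x in residual (Pt n), x ∈ Om → u x = v x := by
  have key : ∀ k : ℕ, ∀ᶠ x in residual (Pt n), x ∈ Om → v x - u x < 1 / ((k : ℝ) + 1) := by
    intro k
    have hk : (0 : ℝ) < 1 / ((k : ℝ) + 1) := by positivity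
    set e : ℝ := 1 / ((k : ℝ) + 1)
    have ho : IsOpen {x | x ∈ Om ∧ v x - u x < e} := by
      rw [Metric.isOpen_iff]
      rintro x ⟨hx, hxe⟩
      obtain ⟨r, hr, hrs⟩ := Metric.isOpen_iff.1 hOm x hx
      have hη : 0 < (e - (v x - u x)) / 2 := by linarith
      obtain ⟨d1, hd1, H1⟩ := h.lsc hx hη
      obtain ⟨d2, hd2, H2⟩ := h.usc hx hη
      refine ⟨min r (min d1 d2), by positivity, fun y hy => ?_⟩
      rw [Metric.mem_ball, lt_min_iff, lt_min_iff, dist_eq_norm] at hy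
      have hyO : y ∈ Om := hrs (by rw [Metric.mem_ball, dist_eq_norm]; exact hy.1)
      exact ⟨hyO, by linarith [H1 y hyO hy.2.1, H2 y hyO hy.2.2]⟩
    have ho2 : IsOpen ({x | x ∈ Om ∧ v x - u x < e} ∪ (closure Om)ᶜ) :=
      ho.union isClosed_closure.isOpen_compl
    have hd : Dense ({x | x ∈ Om ∧ v x - u x < e} ∪ (closure Om)ᶜ) := by
      rw [dense_iff_inter_open]
      rintro W hW ⟨w, hw⟩
      by_cases hwc : w ∈ closure Om
      · obtain ⟨x0, hx0⟩ := mem_closure_iff.1 hwc W hW hw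
        obtain ⟨x, hx, hx2⟩ := h.exists_small hOm hW hx0 hk
        exact ⟨x, hx.1, Or.inl ⟨hx.2, hx2⟩⟩
      · exact ⟨w, hw, Or.inr hwc⟩
    filter_upwards [residual_of_dense_open ho2 hd] with x hx hxO
    rcases hx with hx | hx
    · exact hx.2
    · exact absurd (subset_closure hxO) hx
  filter_upwards [eventually_countable_forall.2 key] with x hx hxO
  refine le_antisymm (h.1.2.2 x hxO) ?_
  by_contra hc
  obtain ⟨k, hk⟩ := exists_nat_one_div_lt (sub_pos.2 (not_le.1 hc))
  linarith [hx k hxO]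

theorem HContPair.le_of_dense {n : ℕ} {Om : Set (Pt n)} (hOm : IsOpen Om)
    {al au bl bu : Pt n → ℝ} (ha : HContPair Om al au) (hb : HContPair Om bl bu)
    {D : Set (Pt n)} (hD : Dense D) (h : ∀ y ∈ D, y ∈ Om → bl y ≤ au y) :
    ∀ x ∈ Om, bl x ≤ au x := by
  intro x hx
  by_contra hc
  have hη : 0 < (bl x - au x) / 2 := by linarith
  obtain ⟨r, hr, hrs⟩ := Metric.isOpen_iff.1 hOm x hx
  obtain ⟨d1, hd1, H1⟩ := hb.lsc hx hη
  obtain ⟨d2, hd2, H2⟩ := ha.usc hx hη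
  obtain ⟨y, hyD, hy⟩ := hD.exists_dist_lt x (show 0 < min r (min d1 d2) by positivity)
  rw [dist_comm, lt_min_iff, lt_min_iff, dist_eq_norm] at hy
  have hyO : y ∈ Om := hrs (by rw [Metric.mem_ball, dist_eq_norm]; exact hy.1)
  linarith [H1 y hyO hy.2.1, H2 y hyO hy.2.2, h y hyD hyO]

theorem LocBddOn.max' {n : ℕ} {Om D : Set (Pt n)} {f g : Pt n → ℝ} (hf : LocBddOn Om D f)
    (hg : LocBddOn Om D g) : LocBddOn Om D (fun y => max (f y) (g y)) := by
  intro x hx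
  obtain ⟨d1, hd1, M1, H1⟩ := hf x hx
  obtain ⟨d2, hd2, M2, H2⟩ := hg x hx
  refine ⟨min d1 d2, by positivity, max M1 M2, fun y h1 h2 h3 => ?_⟩
  rw [lt_min_iff] at h2
  have a1 := H1 y h1 h2.1 h3
  have a2 := H2 y h1 h2.2 h3
  exact lt_of_le_of_lt abs_max_le_max_abs_abs (max_lt_max a1 a2)

theorem HContPair.eq_of_dense {n : ℕ} {Om : Set (Pt n)} (hOm : IsOpen Om)
    {al au bl bu : Pt n → ℝ} (ha : HContPair Om al au) (hb : HContPair Om bl bu)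
    {D : Set (Pt n)} (hD : Dense D) (h : ∀ y ∈ D, y ∈ Om → bl y ≤ au y ∧ al y ≤ bu y) :
    ∀ x ∈ Om, al x = bl x ∧ au x = bu x := by
  have h1 := ha.le_of_dense hOm hb hD (fun y hy hyO => (h y hy hyO).1)
  have h2 := hb.le_of_dense hOm ha hD (fun y hy hyO => (h y hy hyO).2)
  intro x hx
  have hm := ha.1.1.max' hb.1.1
  have A := ha.2 _ _ hm hm
    (fun y hy => ⟨le_max_left _ _, le_rfl, max_le (ha.1.2.2 y hy) (h1 y hy)⟩) x hx
  have B := hb.2 _ _ hm hm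
    (fun y hy => ⟨le_max_right _ _, le_rfl, max_le (h2 y hy) (hb.1.2.2 y hy)⟩) x hx
  exact ⟨A.1.symm.trans B.1, A.2.symm.trans B.2⟩

theorem IsOtimes.point {n : ℕ} {Om : Set (Pt n)} {u₁ v₁ u₂ v₂ ql qu : Pt n → ℝ}
    (h : IsOtimes Om u₁ v₁ u₂ v₂ ql qu) {x : Pt n} (hx : x ∈ Om) (e1 : u₁ x = v₁ x)
    (e2 : u₂ x = v₂ x) : ql x = u₁ x * u₂ x ∧ qu x = u₁ x * u₂ x := by
  obtain ⟨a, b, c⟩ := h.2 x hx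
  simp only [imin, imax, ← e1, ← e2, min_self, max_self] at a c
  exact ⟨by linarith, by linarith⟩

theorem stmt13 {n : ℕ} (Om : Set (Pt n)) (hOm : IsOpen Om)
    (u₁ v₁ u₂ v₂ u₃ v₃ : Pt n → ℝ)
    (h₁ : HContPair Om u₁ v₁) (h₂ : HContPair Om u₂ v₂) (h₃ : HContPair Om u₃ v₃)
    (pl pu ql qu al au bl bu : Pt n → ℝ)
    (hfg : IsOtimes Om u₁ v₁ u₂ v₂ pl pu)
    (hfg_h : IsOtimes Om pl pu u₃ v₃ al au)
    (hgh : IsOtimes Om u₂ v₂ u₃ v₃ ql qu)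
    (hf_gh : IsOtimes Om u₁ v₁ ql qu bl bu) :
    ∀ x ∈ Om, al x = bl x ∧ au x = bu x := by
  have hD := dense_of_mem_residual
    (((h₁.resid hOm).and (h₂.resid hOm)).and (h₃.resid hOm))
  refine hfg_h.1.eq_of_dense hOm hf_gh.1 hD ?_
  rintro y ⟨⟨e1, e2⟩, e3⟩ hy
  replace e1 := e1 hy
  replace e2 := e2 hy
  replace e3 := e3 hy
  obtain ⟨p1, p2⟩ := hfg.point hy e1 e2
  obtain ⟨q1, q2⟩ := hgh.point hy e2 e3
  obtain ⟨a1, a2⟩ := hfg_h.point hy (p1.trans p2.symm) e3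
  obtain ⟨b1, b2⟩ := hf_gh.point hy e1 (q1.trans q2.symm)
  rw [a1, a2, b1, b2, p1, q1, mul_assoc]
  exact ⟨le_rfl, le_rfl⟩
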